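/- Under the hypotheses of the previous statement — f : ℝ^m → ℝ differentiable, μ-strongly convex with L-Lipschitz gradient (0 < μ ≤ L), minimizer φ*, random vector h with E[h] = ∇f(φ) and E[‖h‖²] ≤ ‖∇f(φ)‖² + σ² — if additionally the stepsize satisfies 0 < β ≤ 2/(μ+L), then E[‖φ − β·h − φ*‖²] ≤ (1 − (2μL/(μ+L))·β)·‖φ − φ*‖² + β²·σ², and the contraction factor satisfies 0 ≤ 1 − (2μL/(μ+L))·β < 1. -/

import Mathlib

open MeasureTheory
open scoped RealInnerProductSpace


theorem aux_descent {E : Type*} [NormedAddCommGroup E] [InnerProductSpace ℝ E] [CompleteSpace E]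
    (L : ℝ) (f : E → ℝ) (hf : Differentiable ℝ f)
    (hlip : ∀ x y, ‖gradient f x - gradient f y‖ ≤ L * ‖x - y‖) (x v : E) :
    f (x + v) ≤ f x + ⟪gradient f x, v⟫ + L / 2 * ‖v‖ ^ 2 := by
  have hd : ∀ t : ℝ, HasDerivAt
      (fun t : ℝ => f (x + t • v) - t * ⟪gradient f x, v⟫ - L / 2 * t ^ 2 * ‖v‖ ^ 2)
      (⟪gradient f (x + t • v), v⟫ - ⟪gradient f x, v⟫ - L * t * ‖v‖ ^ 2) t := by
    intro t
    have h1 : HasDerivAt (fun t : ℝ => x + t • v) v t := by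
      simpa using ((hasDerivAt_id t).smul_const v).const_add x
    have h2 := ((hf (x + t • v)).hasGradientAt.hasFDerivAt).comp_hasDerivAt t h1
    have h3 := (hasDerivAt_id t).mul_const ⟪gradient f x, v⟫
    have h4 := (((hasDerivAt_id t).pow 2).const_mul (L / 2)).mul_const (‖v‖ ^ 2)
    refine ((h2.sub h3).sub h4).congr_deriv ?_
    simp only [InnerProductSpace.toDual_apply_apply, id]
    push_cast
    ring
  have hanti := antitoneOn_of_deriv_nonpos (convex_Icc (0 : ℝ) 1)
    (fun t _ => (hd t).continuousAt.continuousWithinAt)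
    (fun t _ => (hd t).differentiableAt.differentiableWithinAt)
    (fun t ht => by
      rw [interior_Icc] at ht
      rw [(hd t).deriv]
      have h1 := real_inner_le_norm (gradient f (x + t • v) - gradient f x) v
      have h2 := hlip (x + t • v) x
      rw [add_sub_cancel_left, norm_smul, Real.norm_of_nonneg ht.1.le] at h2
      rw [inner_sub_left] at h1
      nlinarith [mul_le_mul_of_nonneg_right h2 (norm_nonneg v)])
  have := hanti (Set.left_mem_Icc.2 zero_le_one) (Set.right_mem_Icc.2 zero_le_one) zero_le_one
  simp only [one_smul, zero_smul, add_zero] at this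
  linarith

theorem aux_interp {E : Type*} [NormedAddCommGroup E] [InnerProductSpace ℝ E] [CompleteSpace E]
    (μ L : ℝ) (f : E → ℝ) (hf : Differentiable ℝ f)
    (hsc : ∀ x y, f y ≥ f x + ⟪gradient f x, y - x⟫ + (μ / 2) * ‖y - x‖ ^ 2)
    (hlip : ∀ x y, ‖gradient f x - gradient f y‖ ≤ L * ‖x - y‖) (x y w : E)
    (hw : (L - μ) • w = (gradient f y - gradient f x) - μ • (y - x)) :
    f x - f y + ⟪gradient f x, y - x⟫ + μ / 2 * ‖y - x‖ ^ 2 + (L - μ) / 2 * ‖w‖ ^ 2 ≤ 0 := by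
  have h1 := aux_descent L f hf hlip y (-w)
  have h2 := hsc x (y + -w)
  have e : y + -w - x = (y - x) - w := by abel
  rw [e, norm_sub_sq_real, inner_sub_right] at h2
  rw [inner_neg_right, norm_neg] at h1
  have h3 := congrArg (fun u => ⟪u, w⟫) hw
  simp only [inner_sub_left (𝕜 := ℝ) (_ - _), inner_smul_left, real_inner_self_eq_norm_sq] at h3
  rw [inner_sub_left (gradient f y)] at h3
  simp only [RCLike.conj_to_real] at h3
  linarith

theorem aux_coercive {E : Type*} [NormedAddCommGroup E] [InnerProductSpace ℝ E] [CompleteSpace E]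
    (μ L : ℝ) (hμ : 0 < μ) (hμL : μ ≤ L) (f : E → ℝ) (hf : Differentiable ℝ f)
    (hsc : ∀ x y, f y ≥ f x + ⟪gradient f x, y - x⟫ + (μ / 2) * ‖y - x‖ ^ 2)
    (hlip : ∀ x y, ‖gradient f x - gradient f y‖ ≤ L * ‖x - y‖) (x y : E) :
    ‖gradient f y - gradient f x‖ ^ 2 + μ * L * ‖y - x‖ ^ 2 ≤
      (μ + L) * ⟪gradient f y - gradient f x, y - x⟫ := by
  have esw : x - y = -(y - x) := by abel
  rcases hμL.eq_or_lt with rfl | hlt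
  · have h1 := hsc x y
    have h2 := hsc y x
    have h3 := hlip y x
    rw [esw, norm_neg, inner_neg_right] at h2
    have h4 := pow_le_pow_left₀ (norm_nonneg _) h3 2
    rw [inner_sub_left]
    nlinarith
  · have hne : L - μ ≠ 0 := (sub_pos.2 hlt).ne'
    set w := (L - μ)⁻¹ • ((gradient f y - gradient f x) - μ • (y - x)) with hwdef
    have hw : (L - μ) • w = (gradient f y - gradient f x) - μ • (y - x) := by
      rw [hwdef, smul_inv_smul₀ hne]
    have h1 := aux_interp μ L f hf hsc hlip x y w hw
    have h2 := aux_interp μ L f hf hsc hlip y x (-w) (by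
      rw [smul_neg, hw, esw, smul_neg]; abel)
    rw [esw, norm_neg, norm_neg, inner_neg_right] at h2
    have h3 := congrArg (fun u => ‖u‖ ^ 2) hw
    simp only [norm_sub_sq_real (_ - _) (μ • _), norm_smul, inner_smul_right, mul_pow,
      Real.norm_eq_abs, sq_abs] at h3
    have h4 : μ * ‖y - x‖ ^ 2 + (L - μ) * ‖w‖ ^ 2 ≤
        ⟪gradient f y - gradient f x, y - x⟫ := by
      rw [inner_sub_left]; linarith
    have h5 := mul_le_mul_of_nonneg_left h4 (sub_pos.2 hlt).le
    nlinarith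

/-- Under the hypotheses of the one-step stochastic gradient
bound, if additionally `0 < β ≤ 2/(μ+L)`, then
`E[‖φ − βh − φ*‖²] ≤ (1 − (2μL/(μ+L))β)‖φ−φ*‖² + β²σ²`, and the contraction
factor satisfies `0 ≤ 1 − (2μL/(μ+L))β < 1`. -/
theorem sgd_one_step_contraction
    (m : ℕ) (μ L : ℝ) (hμ : 0 < μ) (hμL : μ ≤ L)
    (f : EuclideanSpace ℝ (Fin m) → ℝ) (hf : Differentiable ℝ f)
    (hsc : ∀ x y, f y ≥ f x + ⟪gradient f x, y - x⟫ + (μ / 2) * ‖y - x‖ ^ 2)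
    (hlip : ∀ x y, ‖gradient f x - gradient f y‖ ≤ L * ‖x - y‖)
    (φstar : EuclideanSpace ℝ (Fin m)) (hmin : ∀ x, f φstar ≤ f x)
    (φ : EuclideanSpace ℝ (Fin m)) (β : ℝ) (hβ : 0 < β) (hβle : β ≤ 2 / (μ + L))
    {α : Type*} [MeasurableSpace α] (P : Measure α) [IsProbabilityMeasure P]
    (h : α → EuclideanSpace ℝ (Fin m))
    (hh_int : Integrable h P)
    (hh_sq : Integrable (fun a => ‖h a‖ ^ 2) P)
    (σ : ℝ) (hσ : 0 ≤ σ)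
    (hmean : ∫ a, h a ∂P = gradient f φ)
    (hsecond : ∫ a, ‖h a‖ ^ 2 ∂P ≤ ‖gradient f φ‖ ^ 2 + σ ^ 2) :
    (∫ a, ‖φ - β • h a - φstar‖ ^ 2 ∂P ≤
      (1 - (2 * μ * L / (μ + L)) * β) * ‖φ - φstar‖ ^ 2 + β ^ 2 * σ ^ 2) ∧
    0 ≤ 1 - (2 * μ * L / (μ + L)) * β ∧
    1 - (2 * μ * L / (μ + L)) * β < 1 := by
  have hL : 0 < L := hμ.trans_le hμL
  have hs : 0 < μ + L := by linarith
  have hβ2 : β * (μ + L) ≤ 2 := (le_div_iff₀ hs).1 hβle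
  have hg0 : gradient f φstar = 0 := by
    have : IsLocalMin f φstar := Filter.Eventually.of_forall hmin
    simp [gradient, this.fderiv_eq_zero]
  have hco := aux_coercive μ L hμ hμL f hf hsc hlip φstar φ
  rw [hg0, sub_zero] at hco
  have hexp : ∀ a, ‖φ - β • h a - φstar‖ ^ 2 =
      ‖φ - φstar‖ ^ 2 - 2 * β * ⟪φ - φstar, h a⟫ + β ^ 2 * ‖h a‖ ^ 2 := by
    intro a
    have e : φ - β • h a - φstar = (φ - φstar) - β • h a := by abel
    rw [e, norm_sub_sq_real, inner_smul_right, norm_smul, mul_pow, Real.norm_eq_abs, sq_abs]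
    ring
  have hin : Integrable (fun a => ⟪φ - φstar, h a⟫) P := hh_int.const_inner _
  have hint : ∫ a, ‖φ - β • h a - φstar‖ ^ 2 ∂P =
      ‖φ - φstar‖ ^ 2 - 2 * β * ⟪gradient f φ, φ - φstar⟫ + β ^ 2 * ∫ a, ‖h a‖ ^ 2 ∂P := by
    simp_rw [hexp]
    have hsub : Integrable (fun a => ‖φ - φstar‖ ^ 2 - 2 * β * ⟪φ - φstar, h a⟫) P :=
      (integrable_const _).sub (hin.const_mul _)
    rw [integral_add hsub (hh_sq.const_mul _),
      integral_sub (integrable_const _) (hin.const_mul _), integral_const_mul, integral_const_mul,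
      integral_inner hh_int, hmean, real_inner_comm]
    simp only [integral_const, probReal_univ, one_smul]
  refine ⟨?_, ?_, ?_⟩
  · rw [hint]
    set G := ‖gradient f φ‖ ^ 2 with hG
    set D := ‖φ - φstar‖ ^ 2 with hD
    set I := ⟪gradient f φ, φ - φstar⟫ with hI
    have hG0 : 0 ≤ G := sq_nonneg _
    have h1 : (G + μ * L * D) / (μ + L) ≤ I := by
      rw [div_le_iff₀ hs]; linarith
    have h2 : β * G ≤ 2 / (μ + L) * G := mul_le_mul_of_nonneg_right hβle hG0
    have h3 := mul_le_mul_of_nonneg_left h1 hβ.le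
    have h4 := mul_le_mul_of_nonneg_left h2 hβ.le
    have h5 := mul_le_mul_of_nonneg_left hsecond (sq_nonneg β)
    have e : β * ((G + μ * L * D) / (μ + L)) =
        β * (2 / (μ + L) * G) / 2 + 2 * μ * L / (μ + L) * β * D / 2 := by
      field_simp
    rw [e] at h3
    nlinarith
  · rw [sub_nonneg, div_mul_eq_mul_div, div_le_one hs]
    have h1 : 2 * μ * L * β * (μ + L) ≤ (μ + L) * (μ + L) := by
      nlinarith [mul_le_mul_of_nonneg_left hβ2 (mul_pos hμ hL).le, sq_nonneg (μ - L)]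
    exact le_of_mul_le_mul_right h1 hs
  · have : 0 < 2 * μ * L / (μ + L) * β := by positivity
    linarith
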